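/- In any nondegenerate triangle, the distance from the centroid X2 to the symmedian point X6 and the distance from X2 to the Spieker center X10 satisfy 2·dist(X2, X10) ≤ dist(X2, X6) ≤ (2 + 3/√2)·dist(X2, X10). -/

import Mathlib

/-- The point with normalized barycentric coordinates `(x : y : z)`
with respect to the triangle `A B C`. -/
noncomputable def bary (A B C : EuclideanSpace ℝ (Fin 2)) (x y z : ℝ) :
    EuclideanSpace ℝ (Fin 2) :=
  (x + y + z)⁻¹ • (x • A + y • B + z • C)

/-- The triangle center with barycentric coordinates
`(f a b c : f b c a : f c a b)` where `a, b, c` are the side lengths. -/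
noncomputable def tcenter (f : ℝ → ℝ → ℝ → ℝ) (A B C : EuclideanSpace ℝ (Fin 2)) :
    EuclideanSpace ℝ (Fin 2) :=
  bary A B C (f (dist B C) (dist C A) (dist A B))
    (f (dist C A) (dist A B) (dist B C))
    (f (dist A B) (dist B C) (dist C A))

/-!
Let `s` be the perimeter, `d ^ 2 = s ^ 2 - 3 (ab + bc + ca)` and `p = 27 abc`. For fixed `s` and
`d`, the squared distances `|X₂X₁₀|²` and `|X₂X₆|²` are polynomials in `p` of degrees one and two,
and in both squared inequalities the right side minus the left side is decreasing in `p`. So it is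
enough to replace `p` by an upper bound: its value for the isosceles triangle with `b = c ≤ a` if
`4 d ≤ s`, and its value for a collinear one if `4 d ≥ s`. At these values the ratio
`|X₂X₆| / |X₂X₁₀|` is `2 s (2 s + d) / (s ^ 2 + 2 d ^ 2)`, between `4` and `2 + 3 / √2`, and
`(7 s ^ 2 - 4 d ^ 2) / (2 (s ^ 2 + 2 d ^ 2))`, between `2` and `3`, respectively.
-/

/-- A measure of the deviation of a triangle with sides `a, b, c` from an equilateral one: with the
perimeter `s`, the spread `d` satisfies `3 (ab + bc + ca) = s ^ 2 - d ^ 2` and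
`3 (a ^ 2 + b ^ 2 + c ^ 2) = s ^ 2 + 2 d ^ 2`, so `s`, `d` and `abc` determine the sides up to
order. -/
noncomputable def spread (a b c : ℝ) : ℝ :=
  √(a ^ 2 + b ^ 2 + c ^ 2 - a * b - b * c - c * a)

/-- The value of `108 s |X₂X₁₀|²` for a triangle of perimeter `s` and spread `d` whose sides have
product `p / 27`. -/
def spiekerForm (s d p : ℝ) : ℝ :=
  2 * s ^ 3 - 5 * s * d ^ 2 - 2 * p

/-- The value of `27 (s ^ 2 + 2 d ^ 2) ^ 2 |X₂X₆|²` for a triangle of perimeter `s` and spread `d`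
whose sides have product `p / 27`. -/
def symmedianForm (s d p : ℝ) : ℝ :=
  6 * (s ^ 2 + 2 * d ^ 2) * (s ^ 2 - d ^ 2) ^ 2 - (s ^ 2 + 2 * d ^ 2) ^ 3
    - 4 * (s ^ 2 + 2 * d ^ 2) * s * p - p ^ 2

section Sides

variable (a b c : ℝ)

lemma spread_nonneg : 0 ≤ spread a b c :=
  Real.sqrt_nonneg _

lemma sq_spread : spread a b c ^ 2 = a ^ 2 + b ^ 2 + c ^ 2 - a * b - b * c - c * a :=
  Real.sq_sqrt (by nlinarith [sq_nonneg (a - b), sq_nonneg (b - c), sq_nonneg (c - a)])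

lemma two_mul_sub_sub_le_two_mul_spread : 2 * a - b - c ≤ 2 * spread a b c := by
  refine le_of_sq_le_sq ?_ (by linarith [spread_nonneg a b c])
  linarith [sq_spread a b c, sq_nonneg (b - c)]

-- With `s = a + b + c` and `d` the spread, `3 a - s`, `3 b - s` and `3 c - s` are the roots of a
-- cubic `x ^ 3 - 3 d ^ 2 x - m`. The claim amounts to `m ≤ 2 d ^ 3`, and at `m = 2 d ^ 3` the cubic
-- factors as `(x - 2 d) (x + d) ^ 2`.
lemma mul_mul_le_isosceles :
    27 * (a * b * c) ≤ (a + b + c + 2 * spread a b c) * (a + b + c - spread a b c) ^ 2 := by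
  have factor : (a + b + c + 2 * spread a b c) * (a + b + c - spread a b c) ^ 2
      - 27 * (a * b * c)
        = (2 * spread a b c - (2 * a - b - c)) * (2 * a - b - c + spread a b c) ^ 2 := by
    linear_combination (-9 * a) * sq_spread a b c
  rw [← sub_nonneg, factor]
  exact mul_nonneg (sub_nonneg.2 (two_mul_sub_sub_le_two_mul_spread a b c)) (sq_nonneg _)

variable {a b c}

lemma mul_mul_le_collinear (ha : a ≤ b + c) (hb : b ≤ c + a) (hc : c ≤ a + b) :
    27 * (a * b * c) ≤ 9 / 8 * (a + b + c) * ((a + b + c) ^ 2 - 4 * spread a b c ^ 2) := by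
  have : 0 ≤ (b + c - a) * (c + a - b) * (a + b - c) :=
    mul_nonneg (mul_nonneg (by linarith) (by linarith)) (by linarith)
  rw [sq_spread]
  linarith

lemma two_mul_spread_le (ha : a ≤ b + c) (hb : b ≤ c + a) (hc : c ≤ a + b) :
    2 * spread a b c ≤ a + b + c := by
  refine le_of_sq_le_sq ?_ (by linarith)
  rw [mul_pow, sq_spread]
  nlinarith [mul_nonneg (sub_nonneg.2 ha) (sub_nonneg.2 hb),
    mul_nonneg (sub_nonneg.2 hb) (sub_nonneg.2 hc), mul_nonneg (sub_nonneg.2 hc) (sub_nonneg.2 ha)]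

end Sides

section Forms

variable {s d p k : ℝ}

lemma antitoneOn_lower_gap (hs : 0 ≤ s) (hd : 2 * d ^ 2 ≤ s ^ 2) :
    AntitoneOn (fun p ↦ s * symmedianForm s d p - (s ^ 2 + 2 * d ^ 2) ^ 2 * spiekerForm s d p)
      (Set.Ici 0) := by
  intro p hp p' hp' hpp'
  have slope : 0 ≤ s * (p + p') + 2 * (s ^ 2 + 2 * d ^ 2) * (s ^ 2 - 2 * d ^ 2) :=
    add_nonneg (mul_nonneg hs (add_nonneg hp hp'))
      (mul_nonneg (by positivity) (sub_nonneg.2 hd))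
  have := mul_nonneg (sub_nonneg.2 hpp') slope
  simp only [symmedianForm, spiekerForm]
  linarith

lemma antitoneOn_upper_gap (hs : 0 ≤ s) (hk : 2 ≤ k) :
    AntitoneOn (fun p ↦ (k * (s ^ 2 + 2 * d ^ 2)) ^ 2 * spiekerForm s d p - s * symmedianForm s d p)
      (Set.Iic (s ^ 3)) := by
  intro p hp p' hp' hpp'
  have slope : 0 ≤ 2 * (k * (s ^ 2 + 2 * d ^ 2)) ^ 2 - 4 * (s ^ 2 + 2 * d ^ 2) * s ^ 2
      - s * (p + p') := by
    have hk_sq : (2 * (s ^ 2 + 2 * d ^ 2)) ^ 2 ≤ (k * (s ^ 2 + 2 * d ^ 2)) ^ 2 := by gcongr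
    have hp_sum : s * (p + p') ≤ s * (s ^ 3 + s ^ 3) := by gcongr <;> assumption
    have : 0 ≤ 2 * s ^ 4 + 24 * s ^ 2 * d ^ 2 + 32 * d ^ 4 := by positivity
    linarith
  have := mul_nonneg (sub_nonneg.2 hpp') slope
  simp only [symmedianForm, spiekerForm]
  linarith

lemma spiekerForm_isosceles :
    spiekerForm s d ((s + 2 * d) * (s - d) ^ 2) = d ^ 2 * (s - 4 * d) := by
  unfold spiekerForm; ring

lemma symmedianForm_isosceles :
    s * symmedianForm s d ((s + 2 * d) * (s - d) ^ 2)
      = (s * (2 * s + d)) ^ 2 * (d ^ 2 * (s - 4 * d)) := by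
  unfold symmedianForm; ring

lemma spiekerForm_collinear :
    spiekerForm s d (9 / 8 * s * (s ^ 2 - 4 * d ^ 2)) = s * (16 * d ^ 2 - s ^ 2) / 4 := by
  unfold spiekerForm; ring

lemma symmedianForm_collinear :
    s * symmedianForm s d (9 / 8 * s * (s ^ 2 - 4 * d ^ 2))
      = ((7 * s ^ 2 - 4 * d ^ 2) / 4) ^ 2 * (s * (16 * d ^ 2 - s ^ 2) / 4) := by
  unfold symmedianForm; ring

-- `8 k (k - 2) ≥ 1` says that the difference of the two sides, a quadratic form in `s` and `d`,
-- has nonpositive discriminant.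
lemma mul_two_mul_add_le (hk : 0 < k) (hk' : 1 ≤ 8 * k * (k - 2)) :
    s * (2 * s + d) ≤ k * (s ^ 2 + 2 * d ^ 2) := by
  have : 0 ≤ 8 * k * (k * (s ^ 2 + 2 * d ^ 2) - s * (2 * s + d)) := by
    nlinarith [sq_nonneg (4 * k * d - s), mul_nonneg (sub_nonneg.2 hk') (sq_nonneg s)]
  exact sub_nonneg.1 (nonneg_of_mul_nonneg_right this (by linarith))

lemma mul_spiekerForm_le_mul_symmedianForm (hd : 0 ≤ d) (hds : 2 * d ≤ s) (hp : 0 ≤ p)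
    (hiso : p ≤ (s + 2 * d) * (s - d) ^ 2) (hcol : p ≤ 9 / 8 * s * (s ^ 2 - 4 * d ^ 2)) :
    (s ^ 2 + 2 * d ^ 2) ^ 2 * spiekerForm s d p ≤ s * symmedianForm s d p := by
  have hs : 0 ≤ s := by linarith
  have hds_sq : (2 * d) ^ 2 ≤ s ^ 2 := by gcongr
  have gap := antitoneOn_lower_gap hs (d := d) (by linarith [sq_nonneg d])
  rw [← sub_nonneg]
  rcases le_total (4 * d) s with h | h
  · refine le_trans ?_ (gap hp (hp.trans hiso) hiso)
    simp only [spiekerForm_isosceles, symmedianForm_isosceles, ← sub_mul]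
    have : s ^ 2 + 2 * d ^ 2 ≤ s * (2 * s + d) := by nlinarith
    refine mul_nonneg (sub_nonneg.2 ?_) (mul_nonneg (sq_nonneg d) (sub_nonneg.2 h))
    gcongr
  · refine le_trans ?_ (gap hp (hp.trans hcol) hcol)
    simp only [spiekerForm_collinear, symmedianForm_collinear, ← sub_mul]
    have : s ^ 2 + 2 * d ^ 2 ≤ (7 * s ^ 2 - 4 * d ^ 2) / 4 := by linarith
    have : s ^ 2 ≤ (4 * d) ^ 2 := by gcongr
    refine mul_nonneg (sub_nonneg.2 ?_) (div_nonneg (mul_nonneg hs (by linarith)) zero_le_four)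
    gcongr

lemma mul_symmedianForm_le_mul_spiekerForm (hk : 2 ≤ k) (hk' : 1 ≤ 8 * k * (k - 2))
    (hd : 0 ≤ d) (hds : 2 * d ≤ s)
    (hiso : p ≤ (s + 2 * d) * (s - d) ^ 2) (hcol : p ≤ 9 / 8 * s * (s ^ 2 - 4 * d ^ 2)) :
    s * symmedianForm s d p ≤ (k * (s ^ 2 + 2 * d ^ 2)) ^ 2 * spiekerForm s d p := by
  have hs : 0 ≤ s := by linarith
  have hds_sq : (2 * d) ^ 2 ≤ s ^ 2 := by gcongr
  have gap := antitoneOn_upper_gap hs hk (d := d)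
  rw [← sub_nonneg]
  rcases le_total (4 * d) s with h | h
  · have hiso_le : (s + 2 * d) * (s - d) ^ 2 ≤ s ^ 3 := by
      nlinarith [mul_nonneg (sq_nonneg d) (sub_nonneg.2 hds)]
    refine le_trans ?_ (gap (hiso.trans hiso_le) hiso_le hiso)
    simp only [spiekerForm_isosceles, symmedianForm_isosceles, ← sub_mul]
    have := mul_two_mul_add_le (by linarith) hk' (s := s) (d := d)
    refine mul_nonneg (sub_nonneg.2 ?_) (mul_nonneg (sq_nonneg d) (sub_nonneg.2 h))
    gcongr
  · have hsd_sq : s ^ 2 ≤ (4 * d) ^ 2 := by gcongr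
    have hcol_le : 9 / 8 * s * (s ^ 2 - 4 * d ^ 2) ≤ s ^ 3 := by
      nlinarith [mul_nonneg hs (sub_nonneg.2 hsd_sq)]
    refine le_trans ?_ (gap (hcol.trans hcol_le) hcol_le hcol)
    simp only [spiekerForm_collinear, symmedianForm_collinear, ← sub_mul]
    have : (7 * s ^ 2 - 4 * d ^ 2) / 4 ≤ k * (s ^ 2 + 2 * d ^ 2) := by nlinarith
    refine mul_nonneg (sub_nonneg.2 ?_) (div_nonneg (mul_nonneg hs (by linarith)) zero_le_four)
    gcongr
    linarith

end Forms

section Triangle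

open Finset

lemma dist_le_dist_add_dist_cyclic {X : Type*} [PseudoMetricSpace X] (A B C : X) :
    dist B C ≤ dist C A + dist A B := by
  simpa only [dist_comm, add_comm] using dist_triangle B A C

variable {V : Type*} [NormedAddCommGroup V] [InnerProductSpace ℝ V] (A B C : V)

/-- The triangle center with barycentric coordinates `(f a b c : f b c a : f c a b)`, where
`a, b, c` are the side lengths of a triangle in an arbitrary real inner product space; in the plane
this is `tcenter`. -/
noncomputable def triangleCenter (f : ℝ → ℝ → ℝ → ℝ) (A B C : V) : V :=
  univ.centerMass ![f (dist B C) (dist C A) (dist A B), f (dist C A) (dist A B) (dist B C),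
    f (dist A B) (dist B C) (dist C A)] ![A, B, C]

lemma tcenter_eq_triangleCenter (f : ℝ → ℝ → ℝ → ℝ) (A B C : EuclideanSpace ℝ (Fin 2)) :
    tcenter f A B C = triangleCenter f A B C := by
  simp [tcenter, bary, triangleCenter, centerMass, Fin.sum_univ_three]

lemma sq_norm_smul_add_smul_add_smul {x y z : ℝ} (h : x + y + z = 0) :
    ‖x • A + y • B + z • C‖ ^ 2
      = -(dist B C ^ 2 * (y * z) + dist C A ^ 2 * (z * x) + dist A B ^ 2 * (x * y)) := by
  have hw : ∑ i, ![x, y, z] i = 0 := by simpa [Fin.sum_univ_three] using h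
  have key := inner_sum_smul_sum_smul_of_sum_eq_zero ![A, B, C] hw ![A, B, C] hw
  simp only [Fin.sum_univ_three, real_inner_self_eq_norm_sq, ← dist_eq_norm] at key
  simp only [Matrix.cons_val, dist_self, dist_comm B A, dist_comm C B, dist_comm A C] at key
  rw [key]
  ring

lemma sq_dist_centroid_centerMass {x y z : ℝ} (h : x + y + z ≠ 0) :
    (3 * (x + y + z)) ^ 2
        * dist (univ.centerMass ![(1 : ℝ), 1, 1] ![A, B, C])
          (univ.centerMass ![x, y, z] ![A, B, C]) ^ 2
      = -(dist B C ^ 2 * ((2 * y - z - x) * (2 * z - x - y))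
        + dist C A ^ 2 * ((2 * z - x - y) * (2 * x - y - z))
        + dist A B ^ 2 * ((2 * x - y - z) * (2 * y - z - x))) := by
  have displacement : (2 * x - y - z) • A + (2 * y - z - x) • B + (2 * z - x - y) • C
      = (3 * (x + y + z)) • (univ.centerMass ![x, y, z] ![A, B, C]
        - univ.centerMass ![(1 : ℝ), 1, 1] ![A, B, C]) := by
    simp only [centerMass, Fin.sum_univ_three, Matrix.cons_val]
    match_scalars <;> field_simp <;> ring
  rw [← sq_norm_smul_add_smul_add_smul A B C (by ring), displacement, norm_smul,
    Real.norm_eq_abs, mul_pow |_|, sq_abs, dist_comm, dist_eq_norm]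

variable {A B C}

lemma sq_dist_centroid_spieker (h : 0 < dist B C + dist C A + dist A B) :
    108 * (dist B C + dist C A + dist A B)
        * dist (triangleCenter (fun _ _ _ ↦ 1) A B C)
          (triangleCenter (fun _ b c ↦ b + c) A B C) ^ 2
      = spiekerForm (dist B C + dist C A + dist A B) (spread (dist B C) (dist C A) (dist A B))
        (27 * (dist B C * dist C A * dist A B)) := by
  have key := sq_dist_centroid_centerMass A B C (x := dist C A + dist A B)
    (y := dist A B + dist B C) (z := dist B C + dist C A) (by linarith)
  refine mul_left_cancel₀ h.ne' ?_
  simp only [triangleCenter, spiekerForm, sq_spread]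
  linear_combination 3 * key

lemma sq_dist_centroid_symmedian (h : 0 < dist B C + dist C A + dist A B) :
    27 * ((dist B C + dist C A + dist A B) ^ 2
          + 2 * spread (dist B C) (dist C A) (dist A B) ^ 2) ^ 2
        * dist (triangleCenter (fun _ _ _ ↦ 1) A B C)
          (triangleCenter (fun a _ _ ↦ a ^ 2) A B C) ^ 2
      = symmedianForm (dist B C + dist C A + dist A B) (spread (dist B C) (dist C A) (dist A B))
        (27 * (dist B C * dist C A * dist A B)) := by
  have hsq : dist B C ^ 2 + dist C A ^ 2 + dist A B ^ 2 ≠ 0 := by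
    nlinarith [sq_nonneg (dist B C - dist C A), sq_nonneg (dist C A - dist A B),
      sq_nonneg (dist A B - dist B C)]
  have key := sq_dist_centroid_centerMass A B C hsq
  simp only [triangleCenter, symmedianForm, sq_spread]
  linear_combination 27 * key

lemma two_mul_dist_spieker_le_dist_symmedian (h : 0 < dist B C + dist C A + dist A B) :
    2 * dist (triangleCenter (fun _ _ _ ↦ 1) A B C) (triangleCenter (fun _ b c ↦ b + c) A B C)
      ≤ dist (triangleCenter (fun _ _ _ ↦ 1) A B C)
          (triangleCenter (fun a _ _ ↦ a ^ 2) A B C) := by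
  have ha := dist_le_dist_add_dist_cyclic A B C
  have hb := dist_le_dist_add_dist_cyclic B C A
  have hc := dist_le_dist_add_dist_cyclic C A B
  have key := mul_spiekerForm_le_mul_symmedianForm (spread_nonneg _ _ _)
    (two_mul_spread_le ha hb hc) (by positivity) (mul_mul_le_isosceles _ _ _)
    (mul_mul_le_collinear ha hb hc)
  rw [← sq_dist_centroid_spieker h, ← sq_dist_centroid_symmedian h] at key
  have scale_pos : 0 < 27 * (dist B C + dist C A + dist A B) * ((dist B C + dist C A + dist A B) ^ 2
      + 2 * spread (dist B C) (dist C A) (dist A B) ^ 2) ^ 2 := by positivity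
  exact le_of_sq_le_sq (le_of_mul_le_mul_left (by linarith) scale_pos) dist_nonneg

lemma dist_symmedian_le_mul_dist_spieker {k : ℝ} (hk : 2 ≤ k) (hk' : 1 ≤ 8 * k * (k - 2))
    (h : 0 < dist B C + dist C A + dist A B) :
    dist (triangleCenter (fun _ _ _ ↦ 1) A B C) (triangleCenter (fun a _ _ ↦ a ^ 2) A B C)
      ≤ 2 * k * dist (triangleCenter (fun _ _ _ ↦ 1) A B C)
          (triangleCenter (fun _ b c ↦ b + c) A B C) := by
  have ha := dist_le_dist_add_dist_cyclic A B C
  have hb := dist_le_dist_add_dist_cyclic B C A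
  have hc := dist_le_dist_add_dist_cyclic C A B
  have key := mul_symmedianForm_le_mul_spiekerForm hk hk' (spread_nonneg _ _ _)
    (two_mul_spread_le ha hb hc) (mul_mul_le_isosceles _ _ _) (mul_mul_le_collinear ha hb hc)
  rw [← sq_dist_centroid_spieker h, ← sq_dist_centroid_symmedian h] at key
  have scale_pos : 0 < 27 * (dist B C + dist C A + dist A B) * ((dist B C + dist C A + dist A B) ^ 2
      + 2 * spread (dist B C) (dist C A) (dist A B) ^ 2) ^ 2 := by positivity
  exact le_of_sq_le_sq (le_of_mul_le_mul_left (by linarith) scale_pos) (by positivity)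

theorem stmt_12_general (A B C : V) (h : ¬(A = B ∧ B = C)) :
    2 * dist (triangleCenter (fun _ _ _ ↦ 1) A B C) (triangleCenter (fun _ b c ↦ b + c) A B C)
        ≤ dist (triangleCenter (fun _ _ _ ↦ 1) A B C)
            (triangleCenter (fun a _ _ ↦ a ^ 2) A B C) ∧
      dist (triangleCenter (fun _ _ _ ↦ 1) A B C) (triangleCenter (fun a _ _ ↦ a ^ 2) A B C)
        ≤ (2 + 3 / √2) * dist (triangleCenter (fun _ _ _ ↦ 1) A B C)
            (triangleCenter (fun _ b c ↦ b + c) A B C) := by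
  have perimeter_pos : 0 < dist B C + dist C A + dist A B := by
    rcases not_and_or.1 h with hAB | hBC
    · have := dist_pos.2 hAB
      positivity
    · have := dist_pos.2 hBC
      positivity
  have two_le : 2 ≤ 1 + 3 / 4 * √2 := by
    linarith [Real.le_sqrt_of_sq_le (show (4 / 3 : ℝ) ^ 2 ≤ 2 by norm_num)]
  have discriminant : 1 ≤ 8 * (1 + 3 / 4 * √2) * (1 + 3 / 4 * √2 - 2) := by
    linarith [Real.sq_sqrt (zero_le_two (α := ℝ))]
  have constant : 2 + 3 / √2 = 2 * (1 + 3 / 4 * √2) := by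
    field_simp
    linarith [Real.sq_sqrt (zero_le_two (α := ℝ))]
  rw [constant]
  exact ⟨two_mul_dist_spieker_le_dist_symmedian perimeter_pos,
    dist_symmedian_le_mul_dist_spieker two_le discriminant perimeter_pos⟩

end Triangle

theorem stmt_12 (A B C : EuclideanSpace ℝ (Fin 2))
    (h : AffineIndependent ℝ ![A, B, C]) :
    2 * dist (tcenter (fun a b c => (1:Real)) A B C) (tcenter (fun a b c => b + c) A B C) ≤ dist (tcenter (fun a b c => (1:Real)) A B C) (tcenter (fun a b c => a^2) A B C) ∧
      dist (tcenter (fun a b c => (1:Real)) A B C) (tcenter (fun a b c => a^2) A B C) ≤ (2 + 3 / Real.sqrt 2) * dist (tcenter (fun a b c => (1:Real)) A B C) (tcenter (fun a b c => b + c) A B C) := by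
  simp only [tcenter_eq_triangleCenter]
  exact stmt_12_general A B C fun hABC ↦ h.injective.ne (by decide : (0 : Fin 3) ≠ 1) hABC.1
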